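/- Let X and Y be compact metric spaces and let T : C(Y) → USC(X) be a standard map, i.e., for every x ∈ X there is ν ∈ P(Y) with sup_{g∈C(Y)} { ∫_Y g dν − Tg(x) } < +∞. Define the Kantorovich envelope ⎵T g(x) := sup_{σ∈P(Y)} inf_{h∈C(Y)} { ∫_Y (g − h) dσ + Th(x) }. Then: (a) ⎵T g ≤ T g pointwise for every g ∈ C(Y); (b) ⎵T is a backward Kantorovich operator (it maps C(Y) to USC(X), is monotone, affine on constants, convex, and lower semicontinuous in g); (c) ⎵T is the largest backward Kantorovich operator below T: if S : C(Y) → USC(X) is any backward Kantorovich operator with Sg ≤ Tg pointwise for all g ∈ C(Y), then Sg ≤ ⎵Tg pointwise for all g ∈ C(Y). Consequently T = ⎵T if and only if T is itself a backward Kantorovich operator. -/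

import Mathlib

open MeasureTheory Topology Filter Set
open scoped ENNReal NNReal

noncomputable section

/-- The positive part of an extended real number, as an element of `ℝ≥0∞`. -/
def epos (a : EReal) : ℝ≥0∞ := if a = ⊤ then ⊤ else ENNReal.ofReal a.toReal

/-- Signed integral of an `EReal`-valued function (the natural value when `f` is
bounded above or bounded below). -/
def eint {α : Type*} [MeasurableSpace α] (μ : Measure α) (f : α → EReal) : EReal :=
  ((∫⁻ x, epos (f x) ∂μ : ℝ≥0∞) : EReal) - ((∫⁻ x, epos (-(f x)) ∂μ : ℝ≥0∞) : EReal)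

/-- The Dirac measure at a point, as a probability measure. -/
def diracP {α : Type*} [MeasurableSpace α] (x : α) : ProbabilityMeasure α :=
  ⟨Measure.dirac x, inferInstance⟩

/-- Membership in `USC(X)`: upper semicontinuous, bounded above, not identically `⊥`. -/
def IsUSCb {X : Type*} [TopologicalSpace X] (f : X → EReal) : Prop :=
  UpperSemicontinuous f ∧ (∃ M : ℝ, ∀ x, f x ≤ (M : EReal)) ∧ (∃ x, f x ≠ ⊥)

/-- A backward Kantorovich operator `T : C(Y) → USC(X)`: monotone, affine on the
constants, convex, and lower semicontinuous with respect to uniform convergence. -/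
def IsBackwardKantorovich {X Y : Type*} [TopologicalSpace X] [TopologicalSpace Y]
    [CompactSpace Y] (T : C(Y, ℝ) → X → EReal) : Prop :=
  (∀ g, IsUSCb (T g)) ∧
  (∀ g₁ g₂ : C(Y, ℝ), (∀ y, g₁ y ≤ g₂ y) → ∀ x, T g₁ x ≤ T g₂ x) ∧
  (∀ (g : C(Y, ℝ)) (c : ℝ) (x : X),
      T (g + ContinuousMap.const Y c) x = T g x + (c : EReal)) ∧
  (∀ (g₁ g₂ : C(Y, ℝ)) (l : ℝ), 0 ≤ l → l ≤ 1 → ∀ x,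
      T (l • g₁ + (1 - l) • g₂) x ≤ (l : EReal) * T g₁ x + ((1 - l : ℝ) : EReal) * T g₂ x) ∧
  (∀ (g : C(Y, ℝ)) (gn : ℕ → C(Y, ℝ)), Tendsto gn atTop (𝓝 g) →
      ∀ x, T g x ≤ liminf (fun n => T (gn n) x) atTop)

/-- The Kantorovich envelope of a map `T : C(Y) → USC(X)`:
`⎵T g(x) = sup_{σ ∈ P(Y)} inf_{h ∈ C(Y)} { ∫ (g − h) dσ + Th(x) }`. -/
def kenv {X Y : Type*} [TopologicalSpace Y] [MeasurableSpace Y]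
    (T : C(Y, ℝ) → X → EReal) (g : C(Y, ℝ)) (x : X) : EReal :=
  ⨆ σ : ProbabilityMeasure Y, ⨅ h : C(Y, ℝ),
    (((∫ y, (g y - h y) ∂(σ : Measure Y)) : ℝ) : EReal) + T h x

section Auxiliary

variable {X Y : Type*} [MetricSpace Y] [CompactSpace Y] [MeasurableSpace Y] [BorelSpace Y]

lemma integrable_continuousMap (σ : ProbabilityMeasure Y) (g : C(Y, ℝ)) :
    Integrable (fun y => g y) (σ : Measure Y) :=
  g.continuous.integrable_of_hasCompactSupport (HasCompactSupport.of_compactSpace _)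

/-- The affine functional `h ↦ ∫ h dσ + b` is a minorant of `h ↦ T h x`. -/
def IsAffineMinorant (T : C(Y, ℝ) → X → EReal) (x : X) (σ : ProbabilityMeasure Y) (b : ℝ) : Prop :=
  ∀ h : C(Y, ℝ), (((∫ y, h y ∂(σ : Measure Y)) + b : ℝ) : EReal) ≤ T h x

lemma coe_le_coe_add_iff (a r : ℝ) (t : EReal) :
    (r : EReal) ≤ (a : EReal) + t ↔ ((r - a : ℝ) : EReal) ≤ t := by
  rw [EReal.coe_sub, EReal.sub_le_iff_le_add (by simp) (by simp), add_comm]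

lemma coe_le_iInf_iff (T : C(Y, ℝ) → X → EReal) (x : X) (g : C(Y, ℝ))
    (σ : ProbabilityMeasure Y) (b : ℝ) :
    (((∫ y, g y ∂(σ : Measure Y)) + b : ℝ) : EReal) ≤
      (⨅ h : C(Y, ℝ), (((∫ y, (g y - h y) ∂(σ : Measure Y)) : ℝ) : EReal) + T h x) ↔
    IsAffineMinorant T x σ b := by
  rw [le_iInf_iff]
  refine forall_congr' fun h => ?_
  rw [coe_le_coe_add_iff,
    integral_sub (integrable_continuousMap σ g) (integrable_continuousMap σ h)]
  ring_nf

lemma kenv_le_iff {T : C(Y, ℝ) → X → EReal} {x : X} {g : C(Y, ℝ)} {a : EReal} :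
    kenv T g x ≤ a ↔ ∀ σ b, IsAffineMinorant T x σ b →
      (((∫ y, g y ∂(σ : Measure Y)) + b : ℝ) : EReal) ≤ a := by
  unfold kenv
  constructor
  · intro h σ b hb
    exact ((coe_le_iInf_iff T x g σ b).2 hb).trans ((le_iSup _ σ).trans h)
  · intro h
    refine iSup_le fun σ => le_of_not_gt fun hlt => ?_
    obtain ⟨r, har, hr⟩ := EReal.lt_iff_exists_real_btwn.1 hlt
    have hr' : r = (∫ y, g y ∂(σ : Measure Y)) + (r - ∫ y, g y ∂(σ : Measure Y)) := by ring
    rw [hr'] at har hr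
    exact har.not_ge (h σ _ ((coe_le_iInf_iff T x g σ _).1 hr.le))

lemma IsAffineMinorant.le_kenv {T : C(Y, ℝ) → X → EReal} {x : X} {σ : ProbabilityMeasure Y}
    {b : ℝ} (h : IsAffineMinorant T x σ b) (g : C(Y, ℝ)) :
    (((∫ y, g y ∂(σ : Measure Y)) + b : ℝ) : EReal) ≤ kenv T g x :=
  kenv_le_iff.1 le_rfl σ b h

lemma kenv_le (T : C(Y, ℝ) → X → EReal) (g : C(Y, ℝ)) (x : X) : kenv T g x ≤ T g x :=
  kenv_le_iff.2 fun _ _ h => h g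

lemma kenv_mono {S T : C(Y, ℝ) → X → EReal} {x : X} (hST : ∀ g, S g x ≤ T g x) (g : C(Y, ℝ)) :
    kenv S g x ≤ kenv T g x :=
  kenv_le_iff.2 fun _ _ h => IsAffineMinorant.le_kenv (fun k => (h k).trans (hST k)) g

lemma kenv_le_kenv_add {T : C(Y, ℝ) → X → EReal} {x : X} {g₁ g₂ : C(Y, ℝ)} {c : ℝ}
    (hg : ∀ y, g₁ y ≤ g₂ y + c) : kenv T g₁ x ≤ kenv T g₂ x + c := by
  refine kenv_le_iff.2 fun σ b h => ?_
  have h₁ : (∫ y, g₁ y ∂(σ : Measure Y)) ≤ (∫ y, g₂ y ∂(σ : Measure Y)) + c := by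
    have := integral_mono (integrable_continuousMap σ g₁)
      ((integrable_continuousMap σ g₂).add (integrable_const (μ := (σ : Measure Y)) c)) hg
    simpa [integral_add (integrable_continuousMap σ g₂) (integrable_const c)] using this
  calc (((∫ y, g₁ y ∂(σ : Measure Y)) + b : ℝ) : EReal)
      ≤ (((∫ y, g₂ y ∂(σ : Measure Y)) + b : ℝ) : EReal) + c := by
        rw [← EReal.coe_add, EReal.coe_le_coe_iff]; linarith
    _ ≤ kenv T g₂ x + c := by gcongr; exact h.le_kenv g₂

lemma kenv_add_const (T : C(Y, ℝ) → X → EReal) (g : C(Y, ℝ)) (c : ℝ) (x : X) :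
    kenv T (g + ContinuousMap.const Y c) x = kenv T g x + (c : EReal) := by
  refine le_antisymm (kenv_le_kenv_add fun y => by simp) ?_
  have h : kenv T g x ≤ kenv T (g + ContinuousMap.const Y c) x + ((-c : ℝ) : EReal) :=
    kenv_le_kenv_add fun y => by simp
  rwa [EReal.coe_neg, ← sub_eq_add_neg, EReal.le_sub_iff_add_le (by simp) (by simp)] at h

lemma kenv_convex {T : C(Y, ℝ) → X → EReal} {x : X} (hbot : ∀ g, kenv T g x ≠ ⊥)
    (htop : ∀ g, kenv T g x ≠ ⊤) (g₁ g₂ : C(Y, ℝ)) {l : ℝ} (hl₀ : 0 ≤ l) (hl₁ : l ≤ 1) :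
    kenv T (l • g₁ + (1 - l) • g₂) x ≤
      (l : EReal) * kenv T g₁ x + ((1 - l : ℝ) : EReal) * kenv T g₂ x := by
  refine kenv_le_iff.2 fun σ b h => ?_
  have h₁ := h.le_kenv g₁
  have h₂ := h.le_kenv g₂
  rw [← EReal.coe_toReal (htop g₁) (hbot g₁)] at h₁ ⊢
  rw [← EReal.coe_toReal (htop g₂) (hbot g₂)] at h₂ ⊢
  rw [EReal.coe_le_coe_iff] at h₁ h₂
  rw [← EReal.coe_mul, ← EReal.coe_mul, ← EReal.coe_add, EReal.coe_le_coe_iff]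
  have hint : (∫ y, (l • g₁ + (1 - l) • g₂) y ∂(σ : Measure Y)) =
      l * (∫ y, g₁ y ∂(σ : Measure Y)) + (1 - l) * ∫ y, g₂ y ∂(σ : Measure Y) := by
    simp only [ContinuousMap.add_apply, ContinuousMap.smul_apply, smul_eq_mul]
    rw [integral_add ((integrable_continuousMap σ g₁).const_mul l)
      ((integrable_continuousMap σ g₂).const_mul (1 - l)), integral_const_mul, integral_const_mul]
  rw [hint]
  have := mul_le_mul_of_nonneg_left h₁ hl₀
  have := mul_le_mul_of_nonneg_left h₂ (sub_nonneg.2 hl₁)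
  linarith

lemma kenv_le_liminf (T : C(Y, ℝ) → X → EReal) {g : C(Y, ℝ)} {gn : ℕ → C(Y, ℝ)}
    (hgn : Tendsto gn atTop (𝓝 g)) (x : X) :
    kenv T g x ≤ liminf (fun n => kenv T (gn n) x) atTop := by
  refine kenv_le_iff.2 fun σ b h => ?_
  have hlim : Tendsto (fun n => (((∫ y, gn n y ∂(σ : Measure Y)) + b : ℝ) : EReal)) atTop
      (𝓝 (((∫ y, g y ∂(σ : Measure Y)) + b : ℝ) : EReal)) := by
    refine (continuous_coe_real_ereal.tendsto _).comp (Tendsto.add_const b ?_)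
    rw [tendsto_iff_dist_tendsto_zero]
    refine squeeze_zero (fun _ => dist_nonneg) (fun n => ?_) (tendsto_iff_dist_tendsto_zero.1 hgn)
    rw [Real.dist_eq, ← integral_sub (integrable_continuousMap σ _) (integrable_continuousMap σ _)]
    simpa [Real.norm_eq_abs] using norm_integral_le_of_norm_le_const (μ := (σ : Measure Y))
      (f := fun y => gn n y - g y) (C := dist (gn n) g) (ae_of_all _ fun y => by
        rw [← dist_eq_norm]; exact ContinuousMap.dist_apply_le_dist y)
  rw [← hlim.liminf_eq]
  exact liminf_le_liminf (Eventually.of_forall fun n => h.le_kenv (gn n))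

lemma upperSemicontinuous_iSup_of_compactSpace {K X : Type*} [TopologicalSpace K] [CompactSpace K]
    [TopologicalSpace X] {F : K × X → EReal} (hF : UpperSemicontinuous F) :
    UpperSemicontinuous fun x => ⨆ k, F (k, x) := by
  intro x a ha
  obtain ⟨r, hr, hra⟩ := exists_between ha
  have h : ∀ᶠ x' in 𝓝 x, ∀ k ∈ (univ : Set K), F (k, x') < r := by
    refine isCompact_univ.eventually_forall_of_forall_eventually fun k _ => ?_
    have hk := hF (k, x) r ((le_iSup (fun k => F (k, x)) k).trans_lt hr)
    exact (continuous_swap.tendsto (x, k)).eventually hk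
  filter_upwards [h] with x' hx'
  exact (iSup_le fun k => (hx' k (mem_univ k)).le).trans_lt hra

lemma upperSemicontinuous_kenv [TopologicalSpace X] {T : C(Y, ℝ) → X → EReal}
    (hT : ∀ g, UpperSemicontinuous (T g)) (g : C(Y, ℝ)) : UpperSemicontinuous (kenv T g) := by
  refine upperSemicontinuous_iSup_of_compactSpace (K := ProbabilityMeasure Y)
    (F := fun p => ⨅ h : C(Y, ℝ),
      (((∫ y, (g y - h y) ∂(p.1 : Measure Y)) : ℝ) : EReal) + T h p.2) ?_
  refine upperSemicontinuous_iInf fun h => ?_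
  refine UpperSemicontinuous.add' (Continuous.upperSemicontinuous ?_)
    ((hT h).comp continuous_snd) fun p => EReal.continuousAt_add (by simp) (by simp)
  exact continuous_coe_real_ereal.comp
    ((ProbabilityMeasure.continuous_integral_continuousMap (g - h)).comp continuous_fst)

lemma exists_probabilityMeasure_integral_eq (l : C(Y, ℝ) →ₗ[ℝ] ℝ)
    (hpos : ∀ g : C(Y, ℝ), (∀ y, 0 ≤ g y) → 0 ≤ l g) (hone : l 1 = 1) :
    ∃ σ : ProbabilityMeasure Y, ∀ g : C(Y, ℝ), ∫ y, g y ∂(σ : Measure Y) = l g := by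
  let Λ : CompactlySupportedContinuousMap Y ℝ →ₚ[ℝ] ℝ :=
  { toFun g := l (g : C(Y, ℝ))
    map_add' g g' := l.map_add (g : C(Y, ℝ)) g'
    map_smul' c g := l.map_smul c (g : C(Y, ℝ))
    monotone' g g' hgg' := by
      have := hpos ((g' : C(Y, ℝ)) - g) fun y => sub_nonneg.2 (hgg' y)
      rw [map_sub] at this
      exact sub_nonneg.1 this }
  have hint (g : C(Y, ℝ)) : ∫ y, g y ∂(RealRMK.rieszMeasure Λ) = l g :=
    RealRMK.integral_rieszMeasure Λ (CompactlySupportedContinuousMap.continuousMapEquiv g)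
  have hprob : IsProbabilityMeasure (RealRMK.rieszMeasure Λ) := by
    have h := hint 1
    rw [hone] at h
    simp only [ContinuousMap.one_apply, integral_const, smul_eq_mul, mul_one] at h
    exact ⟨by rwa [measureReal_def, ENNReal.toReal_eq_one_iff] at h⟩
  exact ⟨⟨_, hprob⟩, hint⟩

lemma exists_isAffineMinorant_of_lt {p : C(Y, ℝ) → ℝ} (hmono : ∀ g₁ g₂ : C(Y, ℝ),
      (∀ y, g₁ y ≤ g₂ y) → p g₁ ≤ p g₂)
    (hconst : ∀ (g : C(Y, ℝ)) (c : ℝ), p (g + ContinuousMap.const Y c) = p g + c)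
    (hconv : ConvexOn ℝ univ p) {g : C(Y, ℝ)} {a : ℝ} (ha : a < p g) :
    ∃ (σ : ProbabilityMeasure Y) (b : ℝ), (∀ h : C(Y, ℝ), (∫ y, h y ∂(σ : Measure Y)) + b ≤ p h) ∧
      (∫ y, g y ∂(σ : Measure Y)) + b = a := by
  have hlip : LipschitzWith 1 p := by
    refine LipschitzWith.of_le_add fun g₁ g₂ => ?_
    rw [← hconst]
    refine hmono _ _ fun y => ?_
    have h₁ : dist (g₁ y) (g₂ y) ≤ dist g₁ g₂ := ContinuousMap.dist_apply_le_dist y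
    rw [Real.dist_eq] at h₁
    have := (le_abs_self _).trans h₁
    simp only [ContinuousMap.add_apply, ContinuousMap.const_apply]
    linarith
  obtain ⟨l, c, hl, hlg⟩ := ConvexOn.exists_affine_le_of_lt (𝕜 := ℝ) (mem_univ g) ha isClosed_univ
    (hlip.continuous.lowerSemicontinuous.lowerSemicontinuousOn _) hconv
  have hle (h : C(Y, ℝ)) : l h + c ≤ p h := hl ⟨h, mem_univ h⟩
  have hpos (k : C(Y, ℝ)) (hk : ∀ y, 0 ≤ k y) : 0 ≤ l k := by
    by_contra! hneg
    obtain ⟨n, hn⟩ := exists_nat_gt ((p 0 - c) / (-l k))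
    rw [div_lt_iff₀ (by linarith)] at hn
    have h₁ := hle (-((n : ℝ) • k))
    have h₂ : p (-((n : ℝ) • k)) ≤ p 0 := hmono _ _ fun y => by
      simpa using mul_nonneg n.cast_nonneg (hk y)
    simp only [map_neg, map_smul, smul_eq_mul] at h₁
    linarith
  have hone : l 1 = 1 := by
    have h₁ (t : ℝ) : t * l 1 + c ≤ p 0 + t := by
      have h := hle (0 + ContinuousMap.const Y t)
      have ht : (0 + ContinuousMap.const Y t : C(Y, ℝ)) = t • 1 := by ext; simp
      rwa [hconst, ht, map_smul, smul_eq_mul] at h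
    by_contra hne
    have hne' : l 1 - 1 ≠ 0 := sub_ne_zero.2 hne
    have h₂ := h₁ ((p 0 - c + 1) / (l 1 - 1))
    have h₃ : (p 0 - c + 1) / (l 1 - 1) * (l 1 - 1) = p 0 - c + 1 := div_mul_cancel₀ _ hne'
    linarith
  obtain ⟨σ, hσ⟩ := exists_probabilityMeasure_integral_eq l.toLinearMap hpos hone
  refine ⟨σ, c, fun h => ?_, ?_⟩
  · rw [hσ]; exact hle h
  · rw [hσ]; exact hlg

lemma IsBackwardKantorovich.le_kenv [TopologicalSpace X] {S : C(Y, ℝ) → X → EReal}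
    (hS : IsBackwardKantorovich S) (g : C(Y, ℝ)) (x : X) : S g x ≤ kenv S g x := by
  obtain ⟨husc, hmono, hconst, hconv, -⟩ := hS
  have htop (h : C(Y, ℝ)) : S h x ≠ ⊤ := by
    obtain ⟨-, ⟨M, hM⟩, -⟩ := husc h
    exact ((hM x).trans_lt (EReal.coe_lt_top M)).ne
  by_cases hbot : ∃ h, S h x = ⊥
  · obtain ⟨h, hh⟩ := hbot
    have hle : S g x ≤ S (h + ContinuousMap.const Y ‖g - h‖) x := hmono _ _ (fun y => by
      have h₁ := (le_abs_self _).trans (ContinuousMap.norm_coe_le_norm (g - h) y)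
      simp only [ContinuousMap.sub_apply] at h₁
      simp only [ContinuousMap.add_apply, ContinuousMap.const_apply]
      linarith) x
    rw [hconst, hh, EReal.bot_add] at hle
    exact hle.trans bot_le
  push Not at hbot
  have hcoe (h : C(Y, ℝ)) : ((S h x).toReal : EReal) = S h x := EReal.coe_toReal (htop h) (hbot h)
  refine le_of_forall_lt fun a ha => ?_
  obtain ⟨r, har, hr⟩ := EReal.lt_iff_exists_real_btwn.1 ha
  rw [← hcoe, EReal.coe_lt_coe_iff] at hr
  obtain ⟨σ, b, hle, heq⟩ := exists_isAffineMinorant_of_lt (p := fun h => (S h x).toReal)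
    (fun g₁ g₂ h => by
      rw [← EReal.coe_le_coe_iff, hcoe, hcoe]; exact hmono g₁ g₂ h x)
    (fun h c => by
      rw [← EReal.coe_eq_coe_iff, EReal.coe_add, hcoe, hcoe]; exact hconst h c x)
    ⟨convex_univ, fun g₁ _ g₂ _ s t hs ht hst => by
      obtain rfl : t = 1 - s := by linarith
      simp only [smul_eq_mul]
      rw [← EReal.coe_le_coe_iff, EReal.coe_add, EReal.coe_mul, EReal.coe_mul, hcoe, hcoe, hcoe]
      exact hconv g₁ g₂ s hs (by linarith) x⟩ hr
  refine har.trans_le ?_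
  rw [← heq]
  exact IsAffineMinorant.le_kenv
    (fun h => by rw [← hcoe, EReal.coe_le_coe_iff]; exact hle h) g

omit [CompactSpace Y] [BorelSpace Y] in
lemma exists_isAffineMinorant {T : C(Y, ℝ) → X → EReal} {x : X} {ν : ProbabilityMeasure Y}
    (hν : (⨆ g : C(Y, ℝ), (((∫ y, g y ∂(ν : Measure Y)) : ℝ) : EReal) - T g x) ≠ ⊤) :
    ∃ b, IsAffineMinorant T x ν b := by
  obtain ⟨r, hr, -⟩ := EReal.lt_iff_exists_real_btwn.1 (lt_top_iff_ne_top.2 hν)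
  refine ⟨-r, fun h => ?_⟩
  have h₁ := (le_iSup (fun g : C(Y, ℝ) =>
    (((∫ y, g y ∂(ν : Measure Y)) : ℝ) : EReal) - T g x) h).trans hr.le
  rw [← sub_eq_add_neg, EReal.coe_sub]
  rw [EReal.sub_le_iff_le_add (by simp) (by simp)] at h₁ ⊢
  rwa [add_comm]

end Auxiliary

/-- **The Kantorovich envelope.**  For a standard map `T : C(Y) → USC(X)`, the
envelope `⎵T` is the largest backward Kantorovich operator below `T`, and
`T = ⎵T` precisely when `T` is itself a backward Kantorovich operator. -/
theorem kantorovich_envelope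
    {X Y : Type*} [MetricSpace X] [CompactSpace X] [MeasurableSpace X] [BorelSpace X]
    [MetricSpace Y] [CompactSpace Y] [MeasurableSpace Y] [BorelSpace Y]
    (T : C(Y, ℝ) → X → EReal)
    (husc : ∀ g, IsUSCb (T g))
    (hstd : ∀ x : X, ∃ ν : ProbabilityMeasure Y,
      (⨆ g : C(Y, ℝ), (((∫ y, g y ∂(ν : Measure Y)) : ℝ) : EReal) - T g x) ≠ ⊤) :
    (∀ (g : C(Y, ℝ)) (x : X), kenv T g x ≤ T g x) ∧
    IsBackwardKantorovich (kenv T) ∧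
    (∀ S : C(Y, ℝ) → X → EReal, IsBackwardKantorovich S →
      (∀ (g : C(Y, ℝ)) (x : X), S g x ≤ T g x) →
      ∀ (g : C(Y, ℝ)) (x : X), S g x ≤ kenv T g x) ∧
    ((∀ (g : C(Y, ℝ)) (x : X), kenv T g x = T g x) ↔ IsBackwardKantorovich T) := by
  have hbot (g : C(Y, ℝ)) (x : X) : kenv T g x ≠ ⊥ := by
    obtain ⟨ν, hν⟩ := hstd x
    obtain ⟨b, hb⟩ := exists_isAffineMinorant hν
    exact ((EReal.bot_lt_coe _).trans_le (hb.le_kenv g)).ne'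
  have htop (g : C(Y, ℝ)) (x : X) : kenv T g x ≠ ⊤ := by
    obtain ⟨-, ⟨M, hM⟩, -⟩ := husc g
    exact (((kenv_le T g x).trans (hM x)).trans_lt (EReal.coe_lt_top M)).ne
  have hkenv : IsBackwardKantorovich (kenv T) := by
    refine ⟨fun g => ⟨upperSemicontinuous_kenv (fun g => (husc g).1) g, ?_, ?_⟩, ?_,
      kenv_add_const T, fun g₁ g₂ l hl₀ hl₁ x =>
        kenv_convex (fun g => hbot g x) (fun g => htop g x) g₁ g₂ hl₀ hl₁,
      fun g gn hgn x => kenv_le_liminf T hgn x⟩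
    · obtain ⟨-, ⟨M, hM⟩, -⟩ := husc g
      exact ⟨M, fun x => (kenv_le T g x).trans (hM x)⟩
    · obtain ⟨-, -, x, -⟩ := husc g
      exact ⟨x, hbot g x⟩
    · intro g₁ g₂ hg x
      simpa using kenv_le_kenv_add (T := T) (x := x) (c := 0) (by simpa using hg)
  refine ⟨kenv_le T, hkenv, fun S hS hST g x =>
    (hS.le_kenv g x).trans (kenv_mono (fun h => hST h x) g), fun h => ?_, fun hT g x =>
    le_antisymm (kenv_le T g x) (hT.le_kenv g x)⟩
  rwa [show kenv T = T from funext fun g => funext fun x => h g x] at hkenv
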